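/- Let V_1, …, V_n be H-modules, each finite-dimensional over F and indecomposable, and suppose every indecomposable H-module that is finite-dimensional over F is isomorphic to some V_i. Then for all m, s : Fin n → ℕ and every H-linear map f : V^(s) → V^(m), there exist t : Fin n → ℕ and a surjective H-linear map p : V^(m) → V^(t) whose kernel equals the range of f. -/

import Mathlib

/-- An `H`-module `M` is indecomposable if it is nonzero and whenever `p` and `q` are
complementary submodules, one of them is trivial. -/
def IsIndecomposableModule (H : Type*) [Ring H] (M : Type*) [AddCommGroup M]
    [Module H M] : Prop :=
  (∃ x : M, x ≠ 0) ∧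
    ∀ p q : Submodule H M, p ⊓ q = ⊥ → p ⊔ q = ⊤ → p = ⊥ ∨ q = ⊥

/-!
Splitting a direct summand `c ⊔ d` of a module, with complement `b`, leaves the summands `c` and `d`
with the strictly larger complements `d ⊔ b` and `c ⊔ b`. The ascending chain condition on
complements therefore makes repeated splitting terminate, so a Noetherian module is a finite direct
sum of indecomposables. Applied to the cokernel of `f`, with the summands grouped by isomorphism
type, this identifies the cokernel with some `V^(t)`, and `p` is the projection onto it.
-/

/-- An element of a lattice with bottom is directly indecomposable if it is not `⊥` and is not the
join of two disjoint elements different from `⊥`. For the lattice of submodules this is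
indecomposability of the submodule as a module, expressed without leaving the ambient lattice. -/
def IsDirectlyIndecomposable {α : Type*} [Lattice α] [OrderBot α] (a : α) : Prop :=
  a ≠ ⊥ ∧ ∀ b c, Disjoint b c → b ⊔ c = a → b = ⊥ ∨ c = ⊥

theorem exists_finset_isDirectlyIndecomposable_of_isCompl {α : Type*} [Lattice α] [BoundedOrder α]
    [IsModularLattice α] [WellFoundedGT α] {a b : α} (hab : IsCompl a b) :
    ∃ s : Finset α, s.SupIndep id ∧ s.sup id = a ∧ ∀ x ∈ s, IsDirectlyIndecomposable x := by
  classical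
  induction b using WellFoundedGT.induction generalizing a with
  | _ b ih =>
  by_cases ha : a = ⊥
  · exact ⟨∅, by simp [ha]⟩
  by_cases hind : IsDirectlyIndecomposable a
  · exact ⟨{a}, by simp [hind]⟩
  obtain ⟨c, d, hcd, rfl, hc, hd⟩ : ∃ c d, Disjoint c d ∧ c ⊔ d = a ∧ c ≠ ⊥ ∧ d ≠ ⊥ := by
    simpa [IsDirectlyIndecomposable, ha] using hind
  have hdb : Disjoint d b := hab.disjoint.mono_left le_sup_right
  have hcb : Disjoint c b := hab.disjoint.mono_left le_sup_left
  have hdc : IsCompl (d ⊔ c) b := sup_comm c d ▸ hab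
  obtain ⟨s, hs, rfl, hs'⟩ := ih (d ⊔ b) (hdb.right_lt_sup_of_left_ne_bot hd)
    (hcd.isCompl_sup_right_of_isCompl_sup_left hab)
  obtain ⟨t, ht, rfl, ht'⟩ := ih (s.sup id ⊔ b) (hcb.right_lt_sup_of_left_ne_bot hc)
    (hcd.symm.isCompl_sup_right_of_isCompl_sup_left hdc)
  refine ⟨s ∪ t, hs.union ht hcd, Finset.sup_union, fun x hx => ?_⟩
  exact (Finset.mem_union.mp hx).elim (hs' x) (ht' x)

section Module

variable {H : Type*} [Ring H]

theorem IsDirectlyIndecomposable.isIndecomposableModule {M : Type*} [AddCommGroup M] [Module H M]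
    {N : Submodule H M} (hN : IsDirectlyIndecomposable N) : IsIndecomposableModule H N := by
  have map_eq_bot {p : Submodule H N} (h : p.map N.subtype = ⊥) : p = ⊥ :=
    Submodule.map_injective_of_injective N.injective_subtype (h.trans (Submodule.map_bot _).symm)
  have := Submodule.nontrivial_iff_ne_bot.mpr hN.1
  refine ⟨exists_ne 0, fun p q hinf hsup => ?_⟩
  refine (hN.2 (p.map N.subtype) (q.map N.subtype) ?_ ?_).imp map_eq_bot map_eq_bot
  · rw [disjoint_iff, ← Submodule.map_inf _ N.injective_subtype, hinf, Submodule.map_bot]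
  · rw [← Submodule.map_sup, hsup, Submodule.map_subtype_top]

theorem exists_directSum_linearEquiv_isIndecomposableModule (M : Type*) [AddCommGroup M]
    [Module H M] [IsNoetherian H M] :
    ∃ s : Finset (Submodule H M), (∀ N ∈ s, IsIndecomposableModule H N) ∧
      Nonempty (M ≃ₗ[H] DirectSum s fun N => N.1) := by
  classical
  obtain ⟨s, hindep, hsup, hs⟩ :=
    exists_finset_isDirectlyIndecomposable_of_isCompl (isCompl_top_bot (α := Submodule H M))
  have hsup' : ⨆ N : s, N.1 = ⊤ := by
    rw [← hsup, Finset.sup_id_eq_sSup, sSup_eq_iSup']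
    rfl
  exact ⟨s, fun N hN => (hs N hN).isIndecomposableModule,
    ⟨(hindep.independent.linearEquiv hsup').symm⟩⟩

theorem exists_directSum_linearEquiv_directSum_sigma_fin {ι κ : Type*} [Finite ι] {N : ι → Type*}
    {V : κ → Type*} [∀ j, AddCommGroup (N j)] [∀ j, Module H (N j)] [∀ i, AddCommGroup (V i)]
    [∀ i, Module H (V i)] (h : ∀ j, ∃ i, Nonempty (N j ≃ₗ[H] V i)) :
    ∃ t : κ → ℕ, Nonempty ((DirectSum ι N) ≃ₗ[H]
      DirectSum (Σ i : κ, Fin (t i)) fun q => V q.1) := by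
  choose c e using h
  let regroup : ι ≃ Σ i, Fin (Nat.card {j // c j = i}) :=
    (Equiv.sigmaFiberEquiv c).symm.trans (Equiv.sigmaCongrRight fun _ => Finite.equivFin _)
  have hregroup (q) : c (regroup.symm q) = q.1 := congrArg Sigma.fst (regroup.apply_symm_apply q)
  have e' (q) : Nonempty (N (regroup.symm q) ≃ₗ[H] V q.1) := hregroup q ▸ e (regroup.symm q)
  exact ⟨_, ⟨(DirectSum.lequivCongrLeft H regroup).trans
    (DirectSum.congrLinearEquiv fun q => (e' q).some)⟩⟩

end Module

theorem exists_linearEquiv_directSum_sigma_fin.{u} (R : Type*) [Semiring R] {H : Type*} [Ring H]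
    [SMul R H] {κ : Type*} {V : κ → Type u} [∀ i, AddCommGroup (V i)] [∀ i, Module H (V i)]
    (hall : ∀ (W : Type u) [AddCommGroup W] [Module H W] [Module R W]
      [IsScalarTower R H W] [IsNoetherian R W],
      IsIndecomposableModule H W → ∃ i, Nonempty (W ≃ₗ[H] V i))
    (M : Type u) [AddCommGroup M] [Module H M] [Module R M] [IsScalarTower R H M]
    [IsNoetherian R M] :
    ∃ t : κ → ℕ, Nonempty (M ≃ₗ[H] DirectSum (Σ i : κ, Fin (t i)) fun q => V q.1) := by
  have : IsNoetherian H M := isNoetherian_of_tower R inferInstance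
  obtain ⟨s, hs, ⟨e⟩⟩ := exists_directSum_linearEquiv_isIndecomposableModule (H := H) M
  have hV (N : s) : ∃ i, Nonempty (N.1 ≃ₗ[H] V i) :=
    have : IsNoetherian R N.1 := isNoetherian_submodule' (N.1.restrictScalars R)
    hall N.1 (hs N.1 N.2)
  obtain ⟨t, ⟨e'⟩⟩ := exists_directSum_linearEquiv_directSum_sigma_fin hV
  exact ⟨t, ⟨e.trans e'⟩⟩

theorem stmt10_general.{u} (R : Type*) [Ring R] {H : Type*} [Ring H] [SMul R H]
    {κ : Type*} {V : κ → Type u} [∀ i, AddCommGroup (V i)] [∀ i, Module H (V i)]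
    (hall : ∀ (W : Type u) [AddCommGroup W] [Module H W] [Module R W]
      [IsScalarTower R H W] [IsNoetherian R W],
      IsIndecomposableModule H W → ∃ i, Nonempty (W ≃ₗ[H] V i))
    {L : Type*} [AddCommGroup L] [Module H L]
    {M : Type u} [AddCommGroup M] [Module H M] [Module R M] [IsScalarTower R H M]
    [IsNoetherian R M] (f : L →ₗ[H] M) :
    ∃ (t : κ → ℕ) (p : M →ₗ[H] DirectSum (Σ i : κ, Fin (t i)) fun q => V q.1),
      Function.Surjective p ∧ LinearMap.ker p = LinearMap.range f := by
  obtain ⟨t, ⟨e⟩⟩ := exists_linearEquiv_directSum_sigma_fin R hall (M ⧸ f.range)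
  refine ⟨t, e ∘ₗ f.range.mkQ, e.surjective.comp f.range.mkQ_surjective, ?_⟩
  rw [LinearEquiv.ker_comp, Submodule.ker_mkQ]

theorem stmt10.{u} (F : Type*) [Field F] (H : Type*) [Ring H] [Algebra F H]
    (n : ℕ) (V : Fin n → Type u)
    [∀ i, AddCommGroup (V i)] [∀ i, Module H (V i)]
    [∀ i, Module F (V i)] [∀ i, IsScalarTower F H (V i)]
    [∀ i, FiniteDimensional F (V i)]
    (hind : ∀ i, IsIndecomposableModule H (V i))
    (hall : ∀ (W : Type u) [AddCommGroup W] [Module H W] [Module F W]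
      [IsScalarTower F H W] [FiniteDimensional F W],
      IsIndecomposableModule H W → ∃ i : Fin n, Nonempty (W ≃ₗ[H] V i))
    (m s : Fin n → ℕ)
    (f : (DirectSum (Σ i : Fin n, Fin (s i)) fun p => V p.1) →ₗ[H]
      (DirectSum (Σ i : Fin n, Fin (m i)) fun p => V p.1)) :
    ∃ (t : Fin n → ℕ)
      (p : (DirectSum (Σ i : Fin n, Fin (m i)) fun q => V q.1) →ₗ[H]
        (DirectSum (Σ i : Fin n, Fin (t i)) fun q => V q.1)),
      Function.Surjective p ∧ LinearMap.ker p = LinearMap.range f := by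
  exact stmt10_general F (fun W => hall W) f
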